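/- Let d be a proper divisor of m with d even, ν₂(d) ∈ {1, ν₂(m) − 1, ν₂(m)}, and gcd(d, m/d) dividing 2. Then the number of integers n with 1 ≤ n ≤ m such that m divides n² − 1 and gcd(n−1, m) = d equals 1 if ν₂(d) = ν₂(m) or (ν₂(m) = ν₂(d) + 1 and ν₂(d) ≥ 1), and equals 2 if ν₂(d) = 1 and ν₂(m) ≥ 3. -/

import Mathlib

/-!
Write `m = d * k`. The condition `gcd (n - 1) m = d` says `n = d * t + 1` with `t` coprime to `k`,
and then `n ^ 2 - 1 = d * t * (d * t + 2)`, so the involutions correspond to the `t` modulo `k`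
which are coprime to `k` and satisfy `k ∣ d * t + 2`. If `k` is odd, this is one invertible linear
congruence modulo `k`. If `d = 2 * e` and `k = 2 * l`, it says that `t` is odd and `l ∣ e * t + 1`:
for even `l` the parity is automatic, and both lifts to `k` of the solution modulo `l` count; for
odd `l` exactly one of the two lifts is odd.
-/

theorem exists_dvd_mul_add_iff_modEq {a r : ℕ} (hr : r ≠ 0) (har : a.Coprime r) (b : ℕ) :
    ∃ c, ∀ t, r ∣ a * t + b ↔ t ≡ c [MOD r] := by
  have : NeZero r := ⟨hr⟩
  obtain ⟨u, hu⟩ := (ZMod.isUnit_iff_coprime a r).2 har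
  refine ⟨(-(↑u⁻¹ : ZMod r) * b).val, fun t ↦ ?_⟩
  rw [← ZMod.natCast_eq_natCast_iff, ZMod.natCast_zmod_val, ← ZMod.natCast_eq_zero_iff]
  push_cast
  rw [← hu, add_eq_zero_iff_eq_neg, ← Units.eq_inv_mul_iff_mul_eq, mul_neg, neg_mul]

theorem card_filter_range_dvd_mul_add {a r : ℕ} (hr : r ≠ 0) (har : a.Coprime r) (b s : ℕ) :
    ((Finset.range (r * s)).filter (fun t ↦ r ∣ a * t + b)).card = s := by
  have hr0 : 0 < r := Nat.pos_of_ne_zero hr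
  obtain ⟨c, hc⟩ := exists_dvd_mul_add_iff_modEq hr har b
  simp only [hc]
  rw [← Nat.count_eq_card_filter_range, Nat.count_modEq_card _ hr0, Nat.mul_div_cancel_left s hr0,
    Nat.mul_mod_right, if_neg (Nat.not_lt_zero _), add_zero]

theorem coprime_of_dvd_mul_add {a b k t : ℕ} (hbk : b.Coprime k) (h : k ∣ a * t + b) :
    t.Coprime k :=
  have hb : t.gcd k ∣ b :=
    (Nat.dvd_add_right ((Nat.gcd_dvd_left t k).mul_left a)).1 ((Nat.gcd_dvd_right t k).trans h)
  Nat.eq_one_of_dvd_coprimes hbk hb (Nat.gcd_dvd_right t k)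

/-- The exponents `n`, one for each residue class modulo `m`, of the Rédei involutions with
`d + χ + 1` fixed points. -/
def involutionExponents (m d : ℕ) : Finset ℕ :=
  (Finset.Icc 1 m).filter (fun n ↦ m ∣ n ^ 2 - 1 ∧ Nat.gcd (n - 1) m = d)

theorem mul_add_one_mem_involutionExponents_iff {d k t : ℕ} (hd : 0 < d) :
    d * t + 1 ∈ involutionExponents (d * k) d ↔ t < k ∧ t.Coprime k ∧ k ∣ d * t + 2 := by
  have hrange : d * t + 1 ≤ d * k ↔ t < k := by
    rw [Nat.add_one_le_iff, Nat.mul_lt_mul_left hd]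
  have hgcd : Nat.gcd (d * t) (d * k) = d ↔ t.Coprime k := by
    rw [Nat.gcd_mul_left, Nat.mul_eq_left hd.ne', Nat.Coprime]
  have hsq : (d * t + 1) ^ 2 - 1 = d * (t * (d * t + 2)) :=
    Nat.sub_eq_of_eq_add (by ring)
  have hdvd (htk : t.Coprime k) : k ∣ t * (d * t + 2) ↔ k ∣ d * t + 2 := htk.symm.dvd_mul_left
  rw [involutionExponents, Finset.mem_filter, Finset.mem_Icc, Nat.add_sub_cancel, hrange, hgcd,
    hsq, Nat.mul_dvd_mul_iff_left hd, and_iff_right (Nat.le_add_left 1 _),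
    and_comm (b := t.Coprime k), and_congr_right hdvd]

theorem card_involutionExponents_mul {d : ℕ} (hd : 0 < d) (k : ℕ) :
    (involutionExponents (d * k) d).card =
      ((Finset.range k).filter (fun t ↦ t.Coprime k ∧ k ∣ d * t + 2)).card := by
  refine (Finset.card_bij (fun t _ ↦ d * t + 1) (fun t ht ↦ ?_) (fun t _ t' _ h ↦ ?_)
    fun n hn ↦ ?_).symm
  · rwa [Finset.mem_filter, Finset.mem_range, ← mul_add_one_mem_involutionExponents_iff hd] at ht
  · exact Nat.eq_of_mul_eq_mul_left hd (Nat.succ_injective h)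
  · obtain ⟨hn_Icc, -, hgcd⟩ := Finset.mem_filter.1 hn
    obtain ⟨t, ht⟩ : d ∣ n - 1 := hgcd ▸ Nat.gcd_dvd_left (n - 1) (d * k)
    obtain rfl : n = d * t + 1 := by rw [← ht, Nat.sub_add_cancel (Finset.mem_Icc.1 hn_Icc).1]
    refine ⟨t, ?_, rfl⟩
    rwa [Finset.mem_filter, Finset.mem_range, ← mul_add_one_mem_involutionExponents_iff hd]

theorem card_involutionExponents_mul_of_odd {d k : ℕ} (hd : 0 < d) (hk : Odd k)
    (hdk : d.Coprime k) : (involutionExponents (d * k) d).card = 1 := by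
  have hcop (t : ℕ) : t.Coprime k ∧ k ∣ d * t + 2 ↔ k ∣ d * t + 2 :=
    and_iff_right_of_imp (coprime_of_dvd_mul_add (Nat.coprime_two_left.2 hk))
  simp only [card_involutionExponents_mul hd, hcop]
  simpa only [mul_one] using card_filter_range_dvd_mul_add hk.pos.ne' hdk 2 1

theorem card_involutionExponents_two_mul_mul_two_mul {e : ℕ} (he : 0 < e) (l : ℕ) :
    (involutionExponents (2 * e * (2 * l)) (2 * e)).card =
      ((Finset.range (2 * l)).filter (fun t ↦ Odd t ∧ l ∣ e * t + 1)).card := by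
  rw [card_involutionExponents_mul (Nat.mul_pos two_pos he)]
  congr 1
  refine Finset.filter_congr fun t _ ↦ ?_
  have hhalf : 2 * l ∣ 2 * e * t + 2 ↔ l ∣ e * t + 1 := by
    rw [show 2 * e * t + 2 = 2 * (e * t + 1) by ring, Nat.mul_dvd_mul_iff_left two_pos]
  rw [hhalf, Nat.coprime_mul_iff_right, Nat.coprime_two_right, and_assoc,
    and_iff_right_of_imp (coprime_of_dvd_mul_add l.coprime_one_left)]

theorem card_involutionExponents_two_mul_mul_two_mul_of_odd {e l : ℕ} (he : 0 < e) (hl : Odd l)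
    (hel : e.Coprime l) : (involutionExponents (2 * e * (2 * l)) (2 * e)).card = 1 := by
  -- Modulo `2`, the sum `2 * (e * t + 1) + l * (t + 1)` is `t + 1`; modulo `l`, it is a unit
  -- multiple of `e * t + 1`. This merges both conditions into one congruence modulo `2 * l`.
  have hcombine (t : ℕ) : Odd t ∧ l ∣ e * t + 1 ↔ 2 * l ∣ (2 * e + l) * t + (2 + l) := by
    have hsum : (2 * e + l) * t + (2 + l) = 2 * (e * t + 1) + l * (t + 1) := by ring
    have htwo : 2 ∣ 2 * (e * t + 1) + l * (t + 1) ↔ Odd t := by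
      rw [Nat.dvd_add_right (dvd_mul_right 2 _), (Nat.coprime_two_left.2 hl).dvd_mul_left,
        ← even_iff_two_dvd, Nat.even_add_one, Nat.not_even_iff_odd]
    have hdvd : l ∣ 2 * (e * t + 1) + l * (t + 1) ↔ l ∣ e * t + 1 := by
      rw [Nat.dvd_add_left (dvd_mul_right l _), (Nat.coprime_two_right.2 hl).dvd_mul_left]
    rw [hsum, ← htwo, ← hdvd]
    exact ⟨fun h ↦ (Nat.coprime_two_left.2 hl).mul_dvd_of_dvd_of_dvd h.1 h.2,
      fun h ↦ ⟨dvd_of_mul_right_dvd h, dvd_of_mul_left_dvd h⟩⟩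
  have hunit : (2 * e + l).Coprime (2 * l) := by
    rw [Nat.coprime_mul_iff_right, Nat.coprime_two_right, Nat.coprime_add_self_left]
    exact ⟨(even_two_mul e).add_odd hl, (Nat.coprime_two_left.2 hl).mul_left hel⟩
  simp only [card_involutionExponents_two_mul_mul_two_mul he, hcombine]
  simpa only [mul_one] using
    card_filter_range_dvd_mul_add (Nat.mul_ne_zero two_ne_zero hl.pos.ne') hunit (2 + l) 1

theorem card_involutionExponents_two_mul_mul_two_mul_of_even {e l : ℕ} (he : 0 < e) (hl0 : l ≠ 0)
    (hl : Even l) (hel : e.Coprime l) :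
    (involutionExponents (2 * e * (2 * l)) (2 * e)).card = 2 := by
  have hodd (t : ℕ) : Odd t ∧ l ∣ e * t + 1 ↔ l ∣ e * t + 1 :=
    and_iff_right_of_imp fun h ↦ Nat.coprime_two_right.1 <|
      (coprime_of_dvd_mul_add l.coprime_one_left h).coprime_dvd_right hl.two_dvd
  simp only [card_involutionExponents_two_mul_mul_two_mul he, hodd]
  rw [mul_comm 2 l]
  exact card_filter_range_dvd_mul_add hl0 hel 1 2

theorem padicValNat_two_eq_zero_iff_odd {n : ℕ} (hn : n ≠ 0) : padicValNat 2 n = 0 ↔ Odd n := by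
  rw [← not_iff_not, Nat.not_odd_iff_even, even_iff_two_dvd]
  exact (dvd_iff_padicValNat_ne_zero hn).symm

theorem exists_halves_of_gcd_dvd_two {d k : ℕ} (hdv : padicValNat 2 d ≠ 0)
    (hkv : padicValNat 2 k ≠ 0) (hgcd : d.gcd k ∣ 2) :
    ∃ e l, d = 2 * e ∧ k = 2 * l ∧ e.Coprime l ∧ padicValNat 2 k = padicValNat 2 l + 1 := by
  obtain ⟨e, rfl⟩ : 2 ∣ d := dvd_of_one_le_padicValNat (Nat.one_le_iff_ne_zero.2 hdv)
  obtain ⟨l, rfl⟩ : 2 ∣ k := dvd_of_one_le_padicValNat (Nat.one_le_iff_ne_zero.2 hkv)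
  refine ⟨e, l, rfl, rfl, ?_, ?_⟩
  · rw [Nat.gcd_mul_left] at hgcd
    exact Nat.dvd_one.1 (Nat.dvd_of_mul_dvd_mul_left two_pos hgcd)
  · have hl : l ≠ 0 := by
      rintro rfl
      exact hkv padicValNat.zero
    rw [padicValNat.mul two_ne_zero hl, padicValNat.self Nat.one_lt_two, add_comm]

theorem stmt_9_general {m d : ℕ} (hm : m ≠ 0) (hdm : d ∣ m) (hgcd : Nat.gcd d (m / d) ∣ 2) :
    ((padicValNat 2 d = padicValNat 2 m ∨
        (padicValNat 2 m = padicValNat 2 d + 1 ∧ 1 ≤ padicValNat 2 d)) →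
      (involutionExponents m d).card = 1) ∧
    ((padicValNat 2 d = 1 ∧ 3 ≤ padicValNat 2 m) → (involutionExponents m d).card = 2) := by
  obtain ⟨k, rfl⟩ := hdm
  obtain ⟨hd, hk⟩ : d ≠ 0 ∧ k ≠ 0 := mul_ne_zero_iff.1 hm
  rw [Nat.mul_div_cancel_left k (Nat.pos_of_ne_zero hd)] at hgcd
  rw [padicValNat.mul hd hk]
  refine ⟨?_, fun ⟨hdv, hmv⟩ ↦ ?_⟩
  · rintro (hv | ⟨hv, hdv⟩)
    · have hk_odd : Odd k := (padicValNat_two_eq_zero_iff_odd hk).1 (by omega)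
      have hdk : d.Coprime k := Nat.eq_one_of_dvd_coprimes (Nat.coprime_two_left.2 hk_odd) hgcd
        (Nat.gcd_dvd_right d k)
      exact card_involutionExponents_mul_of_odd (Nat.pos_of_ne_zero hd) hk_odd hdk
    · obtain ⟨e, l, rfl, rfl, hel, hlv⟩ := exists_halves_of_gcd_dvd_two (by omega) (by omega) hgcd
      have hl_odd : Odd l := (padicValNat_two_eq_zero_iff_odd (by omega)).1 (by omega)
      exact card_involutionExponents_two_mul_mul_two_mul_of_odd (by omega) hl_odd hel
  · obtain ⟨e, l, rfl, rfl, hel, hlv⟩ := exists_halves_of_gcd_dvd_two (by omega) (by omega) hgcd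
    have hl_even : Even l := even_iff_two_dvd.2 (dvd_of_one_le_padicValNat (by omega))
    exact card_involutionExponents_two_mul_mul_two_mul_of_even (by omega) (by omega) hl_even hel

/-- Proposition 3.3: the number of Rédei involutions with d + χ + 1 fixed
points for a fixed parameter a. -/
theorem stmt_9 (q : ℕ) (hq : ∃ p' j : ℕ, p'.Prime ∧ Odd p' ∧ 0 < j ∧ q = p' ^ j)
    (χ : ℤ) (hχ : χ = 1 ∨ χ = -1) (m : ℕ) (hm : (m : ℤ) = (q : ℤ) - χ)
    (d : ℕ) (hdm : d ∣ m) (hdne : d ≠ m) (hdeven : Even d)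
    (hval : padicValNat 2 d = 1 ∨ padicValNat 2 d = padicValNat 2 m - 1 ∨
      padicValNat 2 d = padicValNat 2 m)
    (hgcd : Nat.gcd d (m / d) ∣ 2) :
    ((padicValNat 2 d = padicValNat 2 m ∨
        (padicValNat 2 m = padicValNat 2 d + 1 ∧ 1 ≤ padicValNat 2 d)) →
      ((Finset.Icc 1 m).filter
        (fun n => m ∣ n ^ 2 - 1 ∧ Nat.gcd (n - 1) m = d)).card = 1) ∧
    ((padicValNat 2 d = 1 ∧ 3 ≤ padicValNat 2 m) →
      ((Finset.Icc 1 m).filter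
        (fun n => m ∣ n ^ 2 - 1 ∧ Nat.gcd (n - 1) m = d)).card = 2) := by
  obtain ⟨p, j, hp, -, hj, rfl⟩ := hq
  have hq_gt_one : 1 < p ^ j := Nat.one_lt_pow hj.ne' hp.one_lt
  exact stmt_9_general (by omega) hdm hgcd
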